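/- arXiv:1905.01259 — 8 statements merged into one kernel-verified Lean document; each statement's English description precedes it below -/
import Mathlib

section
/- Let D be a finite digraph of order n with minimum in-degree δ⁻ and maximum out-degree Δ⁺, and suppose γ₁ᵒ(D) = (1 + δ⁻)·n / (2Δ⁺ + δ⁻ + 1). If S is a global offensive 1-alliance in D of minimum cardinality, then: (a) every vertex v ∉ S has in-degree exactly δ⁻ in D; (b) every vertex v ∉ S satisfies deg⁻_S(v) = deg⁻_{V(D)\S}(v) + 1; (c) every vertex of S has exactly Δ⁺ out-neighbors, all of them outside S; and (d) all vertices of V(D)\S have the same in-degree r' in the subdigraph induced by V(D)\S, and |V(D)\S|·(r' + 1) = |S|·Δ⁺. -/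
open Finset

variable {V : Type*}

/-- In-degree of `v` from the set `T` in the digraph with arc relation `A`. -/
def inDegOn [Fintype V] (A : V → V → Prop) [DecidableRel A] (T : Finset V) (v : V) : ℕ :=
  (T.filter fun u => A u v).card

/-- Out-degree of `v` to the set `T` in the digraph with arc relation `A`. -/
def outDegOn [Fintype V] (A : V → V → Prop) [DecidableRel A] (T : Finset V) (v : V) : ℕ :=
  (T.filter fun w => A v w).card

/-- `S` is a global offensive `k`-alliance in the digraph with arc relation `A`. -/
def GOkA [Fintype V] [DecidableEq V] (A : V → V → Prop) [DecidableRel A] (k : ℤ)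
    (S : Finset V) : Prop :=
  ∀ v ∉ S, (∃ u ∈ S, A u v) ∧ ((inDegOn A Sᶜ v : ℤ) + k ≤ (inDegOn A S v : ℤ))

/-- The global offensive `k`-alliance number of a digraph. -/
noncomputable def goNum [Fintype V] [DecidableEq V] (A : V → V → Prop) [DecidableRel A]
    (k : ℤ) : ℕ :=
  sInf {m | ∃ S : Finset V, GOkA A k S ∧ S.card = m}

/-- Maximum out-degree `Δ⁺`. -/
def maxOutDeg [Fintype V] (A : V → V → Prop) [DecidableRel A] : ℕ :=
  univ.sup fun v => outDegOn A univ v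

/-- Maximum in-degree `Δ⁻`. -/
def maxInDeg [Fintype V] (A : V → V → Prop) [DecidableRel A] : ℕ :=
  univ.sup fun v => inDegOn A univ v

/-- Minimum in-degree `δ⁻`. -/
def minInDeg [Fintype V] [Nonempty V] (A : V → V → Prop) [DecidableRel A] : ℕ :=
  univ.inf' univ_nonempty fun v => inDegOn A univ v

/-- Equality case of the lower bound `γ₁ᵒ(D) ≥ (1 + δ⁻)n/(2Δ⁺ + δ⁻ + 1)`: if equality holds
and `S` is a minimum global offensive 1-alliance, then (a) every vertex outside `S` has
in-degree exactly `δ⁻`; (b) every vertex `v ∉ S` satisfies `deg⁻_S(v) = deg⁻_{S̄}(v) + 1`;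
(c) every vertex of `S` has exactly `Δ⁺` out-neighbors, all outside `S`; and (d) all vertices
outside `S` have the same in-degree `r'` in the subdigraph induced by `S̄`, with
`|S̄|·(r' + 1) = |S|·Δ⁺`. -/
theorem goNum_lower_bound_equality_case [Fintype V] [DecidableEq V] [Nonempty V]
    (A : V → V → Prop) [DecidableRel A] (hloopless : ∀ v, ¬ A v v)
    (heq : (goNum A 1 : ℚ) =
      (1 + (minInDeg A : ℚ)) * (Fintype.card V : ℚ) /
        (2 * (maxOutDeg A : ℚ) + (minInDeg A : ℚ) + 1))
    (S : Finset V) (hS : GOkA A 1 S) (hScard : S.card = goNum A 1) :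
    (∀ v ∉ S, inDegOn A univ v = minInDeg A) ∧
    (∀ v ∉ S, inDegOn A S v = inDegOn A Sᶜ v + 1) ∧
    (∀ u ∈ S, outDegOn A univ u = maxOutDeg A ∧ outDegOn A S u = 0) ∧
    (∃ r' : ℕ, (∀ v ∉ S, inDegOn A Sᶜ v = r') ∧
      Sᶜ.card * (r' + 1) = S.card * maxOutDeg A) := by
  have hsplit_in : ∀ v, inDegOn A univ v = inDegOn A S v + inDegOn A Sᶜ v := by
    intro v
    unfold inDegOn
    rw [← Finset.card_union_of_disjoint
      (Finset.disjoint_filter_filter disjoint_compl_right), ← Finset.filter_union,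
      Finset.union_compl]
  have hsplit_out : ∀ v, outDegOn A univ v = outDegOn A S v + outDegOn A Sᶜ v := by
    intro v
    unfold outDegOn
    rw [← Finset.card_union_of_disjoint
      (Finset.disjoint_filter_filter disjoint_compl_right), ← Finset.filter_union,
      Finset.union_compl]
  have hmin : ∀ v, minInDeg A ≤ inDegOn A univ v := fun v =>
    Finset.inf'_le (fun v => inDegOn A univ v) (Finset.mem_univ v)
  have hmax : ∀ v, outDegOn A univ v ≤ maxOutDeg A := fun v =>
    Finset.le_sup (f := fun v => outDegOn A univ v) (Finset.mem_univ v)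
  have hcount : ∑ u ∈ S, outDegOn A Sᶜ u = ∑ v ∈ Sᶜ, inDegOn A S v :=
    Finset.sum_card_bipartiteAbove_eq_sum_card_bipartiteBelow A
  have hn : S.card + Sᶜ.card = Fintype.card V := Finset.card_add_card_compl S
  have hkey : 2 * maxOutDeg A * S.card = (1 + minInDeg A) * Sᶜ.card := by
    rw [← hScard, ← hn, eq_div_iff (by positivity)] at heq
    have h2 : S.card * (2 * maxOutDeg A + minInDeg A + 1)
        = (1 + minInDeg A) * (S.card + Sᶜ.card) := by exact_mod_cast heq
    nlinarith
  have hall : ∀ v ∉ S, inDegOn A Sᶜ v + 1 ≤ inDegOn A S v := by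
    intro v hv
    exact_mod_cast (hS v hv).2
  have hlow : ∀ v ∈ Sᶜ, 1 + minInDeg A ≤ 2 * inDegOn A S v := by
    intro v hv
    have h1 := hall v (Finset.mem_compl.1 hv)
    have h2 := hmin v
    have h3 := hsplit_in v
    omega
  have hup : ∀ u ∈ S, outDegOn A Sᶜ u ≤ maxOutDeg A := by
    intro u _
    have h2 := hmax u
    have h3 := hsplit_out u
    omega
  have hlows := Finset.sum_le_sum hlow
  have hups := Finset.sum_le_sum hup
  have hlows' := hlows
  have hups' := hups
  rw [Finset.sum_const, smul_eq_mul, ← Finset.mul_sum] at hlows'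
  rw [Finset.sum_const, smul_eq_mul] at hups'
  have elow : ∀ v ∈ Sᶜ, 1 + minInDeg A = 2 * inDegOn A S v := by
    refine (Finset.sum_eq_sum_iff_of_le hlow).1 ?_
    rw [Finset.sum_const, smul_eq_mul, ← Finset.mul_sum]
    nlinarith
  have eup : ∀ u ∈ S, outDegOn A Sᶜ u = maxOutDeg A := by
    refine (Finset.sum_eq_sum_iff_of_le hup).1 ?_
    rw [Finset.sum_const, smul_eq_mul]
    nlinarith
  have hb : ∀ v ∉ S, inDegOn A S v = inDegOn A Sᶜ v + 1 := by
    intro v hv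
    have h0 := elow v (Finset.mem_compl.2 hv)
    have h1 := hall v hv
    have h2 := hmin v
    have h3 := hsplit_in v
    omega
  refine ⟨?_, hb, ?_, (1 + minInDeg A) / 2 - 1, ?_, ?_⟩
  · intro v hv
    have h0 := elow v (Finset.mem_compl.2 hv)
    have h1 := hb v hv
    have h3 := hsplit_in v
    omega
  · intro u hu
    have h0 := eup u hu
    have h2 := hmax u
    have h3 := hsplit_out u
    omega
  · intro v hv
    have h0 := elow v (Finset.mem_compl.2 hv)
    have h1 := hb v hv
    omega
  · rcases Finset.eq_empty_or_nonempty Sᶜ with h | ⟨v, hv⟩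
    · rw [h, Finset.card_empty] at hkey ⊢
      nlinarith
    · have h0 := elow v hv
      have h1 := hb v (Finset.mem_compl.1 hv)
      have h4 : (1 + minInDeg A) / 2 - 1 + 1 = inDegOn A S v := by omega
      rw [h4]
      rw [h0] at hkey
      nlinarith
end

section
/- Let D be a finite digraph whose vertex set is partitioned into sets {v₁,…,v_{n'}} and {u₁,…,u_p}, and let r' and r be nonnegative integers such that: every vertex u_i has out-degree exactly r, all out-neighbors of each u_i lying in {v₁,…,v_{n'}}; every vertex v_j has exactly r' + 1 in-neighbors among {u₁,…,u_p}; every vertex v_j has in-degree exactly r' in the subdigraph induced by {v₁,…,v_{n'}}; every vertex u_i has in-degree at least 2r' + 1 in D; p·r = (r'+1)·n'; and the maximum out-degree of D equals r. Then {u₁,…,u_p} is a global offensive 1-alliance in D, δ⁻(D) = 2r' + 1, Δ⁺(D) = r, and γ₁ᵒ(D) ≤ p = (1 + δ⁻(D))·(n' + p)/(2Δ⁺(D) + δ⁻(D) + 1). -/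
open Finset

variable {V : Type*}

/-- The family `Φ`: if the vertex set of `D` is partitioned into `Vs = {v₁,…,v_{n'}}` and
`U = {u₁,…,u_p}` with: every `uᵢ` of out-degree exactly `r`, all its out-neighbors in `Vs`;
every `vⱼ` with exactly `r' + 1` in-neighbors in `U`; every `vⱼ` of in-degree exactly `r'` in
the subdigraph induced by `Vs`; every `uᵢ` of in-degree at least `2r' + 1`; `p·r = (r'+1)·n'`;
and `Δ⁺(D) = r`; then `U` is a global offensive 1-alliance, `δ⁻(D) = 2r' + 1`, `Δ⁺(D) = r`,
and `γ₁ᵒ(D) ≤ p = (1 + δ⁻)(n' + p)/(2Δ⁺ + δ⁻ + 1)`. -/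
theorem phi_family_attains_bound [Fintype V] [DecidableEq V] [Nonempty V]
    (A : V → V → Prop) [DecidableRel A] (hloopless : ∀ v, ¬ A v v)
    (Vs U : Finset V) (r' r : ℕ)
    (hVs : Vs.Nonempty) (hU : U.Nonempty)
    (hcover : Vs ∪ U = univ) (hdisj : Disjoint Vs U)
    (hUout : ∀ u ∈ U, outDegOn A univ u = r ∧ ∀ w, A u w → w ∈ Vs)
    (hVinU : ∀ v ∈ Vs, inDegOn A U v = r' + 1)
    (hVinV : ∀ v ∈ Vs, inDegOn A Vs v = r')
    (hUin : ∀ u ∈ U, 2 * r' + 1 ≤ inDegOn A univ u)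
    (hcount : U.card * r = (r' + 1) * Vs.card)
    (hmax : maxOutDeg A = r) :
    GOkA A 1 U ∧ minInDeg A = 2 * r' + 1 ∧ maxOutDeg A = r ∧
    goNum A 1 ≤ U.card ∧
    (U.card : ℚ) = (1 + (minInDeg A : ℚ)) * ((Vs.card : ℚ) + (U.card : ℚ)) /
      (2 * (maxOutDeg A : ℚ) + (minInDeg A : ℚ) + 1) := by
  have hcompl : Uᶜ = Vs := by
    ext x
    have h1 : x ∈ Vs ∪ U := by rw [hcover]; exact mem_univ x
    have h2 : x ∈ Vs → x ∉ U := fun h => Finset.disjoint_left.mp hdisj h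
    rw [mem_union] at h1
    rw [mem_compl]
    tauto
  have hgo : GOkA A 1 U := by
    intro v hv
    have hvV : v ∈ Vs := by rw [← hcompl]; exact mem_compl.mpr hv
    refine ⟨?_, ?_⟩
    · have h := hVinU v hvV
      have hpos : 0 < (U.filter fun u => A u v).card := by
        unfold inDegOn at h
        omega
      obtain ⟨u, hu⟩ := Finset.card_pos.mp hpos
      rw [mem_filter] at hu
      exact ⟨u, hu.1, hu.2⟩
    · rw [hcompl, hVinU v hvV, hVinV v hvV]
      push_cast
      exact le_refl _
  have hdeg : ∀ v ∈ Vs, inDegOn A univ v = 2 * r' + 1 := by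
    intro v hv
    have h1 := hVinU v hv
    have h2 := hVinV v hv
    unfold inDegOn at *
    rw [← hcover, filter_union, card_union_of_disjoint (disjoint_filter_filter hdisj), h1, h2]
    ring
  have hmin : minInDeg A = 2 * r' + 1 := by
    unfold minInDeg
    apply le_antisymm
    · obtain ⟨v, hv⟩ := hVs
      rw [← hdeg v hv]
      exact Finset.inf'_le _ (mem_univ v)
    · apply Finset.le_inf'
      intro x _
      have h1 : x ∈ Vs ∪ U := by rw [hcover]; exact mem_univ x
      rcases mem_union.mp h1 with h | h
      · exact (hdeg x h).ge
      · exact hUin x h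
  refine ⟨hgo, hmin, hmax, Nat.sInf_le ⟨U, hgo, rfl⟩, ?_⟩
  rw [hmin, hmax]
  have hc : (U.card : ℚ) * r = (r' + 1) * Vs.card := by exact_mod_cast hcount
  have hne : (2 * (r : ℚ) + ((2 * r' + 1 : ℕ) : ℚ) + 1) ≠ 0 := by positivity
  rw [eq_div_iff hne]
  push_cast
  linear_combination 2 * hc
end

section
/- Let G be a finite simple graph of order n with minimum degree δ and maximum degree Δ, and let k be an integer with 2 - Δ ≤ k ≤ Δ. Then γₖᵒ(G) ≥ ⌈(k + δ)·n / (2Δ + δ + k)⌉. -/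
open Finset

variable {V : Type*}

/-- `S` is a global offensive `k`-alliance in the simple graph `G`. -/
def GraphGOkA [Fintype V] [DecidableEq V] (G : SimpleGraph V) [DecidableRel G.Adj] (k : ℤ)
    (S : Finset V) : Prop :=
  ∀ v ∉ S, (∃ u ∈ S, G.Adj u v) ∧
    (((Sᶜ.filter fun u => G.Adj u v).card : ℤ) + k ≤ ((S.filter fun u => G.Adj u v).card : ℤ))

/-- The global offensive `k`-alliance number of a simple graph. -/
noncomputable def graphGoNum [Fintype V] [DecidableEq V] (G : SimpleGraph V)
    [DecidableRel G.Adj] (k : ℤ) : ℕ :=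
  sInf {m | ∃ S : Finset V, GraphGOkA G k S ∧ S.card = m}

/-- For a graph `G` of order `n`, minimum degree `δ` and maximum degree `Δ`, and any integer
`k` with `2 - Δ ≤ k ≤ Δ`, we have `γₖᵒ(G) ≥ ⌈(k + δ)n / (2Δ + δ + k)⌉`. -/
theorem graphGoNum_lower_bound [Fintype V] [DecidableEq V]
    (G : SimpleGraph V) [DecidableRel G.Adj] (k : ℤ)
    (hk₁ : 2 - (G.maxDegree : ℤ) ≤ k) (hk₂ : k ≤ (G.maxDegree : ℤ)) :
    (graphGoNum G k : ℤ) ≥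
      ⌈((k + (G.minDegree : ℤ)) * (Fintype.card V) /
        (2 * (G.maxDegree : ℤ) + (G.minDegree : ℤ) + k) : ℚ)⌉ := by
  have key : ∀ S : Finset V, GraphGOkA G k S →
      (k + (G.minDegree : ℤ)) * (Fintype.card V) ≤
        S.card * (2 * (G.maxDegree : ℤ) + (G.minDegree : ℤ) + k) := by
    intro S hS
    have h1 : ∀ v ∈ Sᶜ, (k + (G.minDegree : ℤ)) ≤
        2 * ((S.filter fun u => G.Adj u v).card : ℤ) := by
      intro v hv
      have hv' : v ∉ S := by simpa using hv
      have h := (hS v hv').2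
      have hd : (S.filter fun u => G.Adj u v).card + (Sᶜ.filter fun u => G.Adj u v).card
          = G.degree v := by
        rw [← Finset.card_union_of_disjoint, ← Finset.filter_union, Finset.union_compl,
          ← G.card_neighborFinset_eq_degree]
        · congr 1
          ext u
          simp [G.adj_comm]
        · exact Finset.disjoint_filter_filter disjoint_compl_right
      have hm := G.minDegree_le_degree v
      omega
    have h2 : ∑ v ∈ Sᶜ, (S.filter fun u => G.Adj u v).card ≤ S.card * G.maxDegree := by
      have e : ∑ v ∈ Sᶜ, (S.filter fun u => G.Adj u v).card
          = ∑ u ∈ S, (Sᶜ.filter fun v => G.Adj u v).card :=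
        (Finset.sum_card_bipartiteAbove_eq_sum_card_bipartiteBelow (fun u v => G.Adj u v)).symm
      rw [e, ← smul_eq_mul]
      apply Finset.sum_le_card_nsmul
      intro u _
      refine le_trans ?_ (G.degree_le_maxDegree u)
      rw [← G.card_neighborFinset_eq_degree]
      apply Finset.card_le_card
      intro v
      simp
    have h3 := Finset.card_nsmul_le_sum _ _ _ h1
    rw [← Finset.mul_sum, nsmul_eq_mul] at h3
    have h4 : (∑ v ∈ Sᶜ, ((S.filter fun u => G.Adj u v).card : ℤ)) ≤ S.card * G.maxDegree := by
      exact_mod_cast h2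
    have h5 : (S.card : ℤ) + (Sᶜ.card : ℤ) = Fintype.card V := by
      exact_mod_cast Finset.card_add_card_compl S
    rw [← h5]
    linarith
  have hne : {m | ∃ S : Finset V, GraphGOkA G k S ∧ S.card = m}.Nonempty :=
    ⟨_, Finset.univ, fun v hv => absurd (Finset.mem_univ v) hv, rfl⟩
  obtain ⟨S, hS, hc⟩ := Nat.sInf_mem hne
  have hc' : S.card = graphGoNum G k := hc
  have hkey := key S hS
  rw [hc'] at hkey
  have hpos : (0 : ℤ) < 2 * (G.maxDegree : ℤ) + (G.minDegree : ℤ) + k := by omega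
  rw [ge_iff_le, Int.ceil_le, div_le_iff₀ (by exact_mod_cast hpos)]
  exact_mod_cast hkey
end

section
/- Let k ≥ 1 and p be integers with k ≤ p ≤ 2k - 1. Let D be the digraph obtained from the complete biorientation of the complete bipartite graph K_{p,p}, with partite sets X = {x₁,…,x_p} and Y = {y₁,…,y_p}, by removing all arcs (x_i, y_j) and (y_j, x_i) for 1 ≤ i, j ≤ k. Then D has exactly 2k vertices of in-degree less than k, and γₖᵒ(D) = (2p + 2k)/2 = p + k, attaining the bound γₖᵒ(D) = (n + n_{<k})/2 for bipartite digraphs. -/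
open Finset

variable {V : Type*}

/-- The arc relation of the digraph obtained from the complete biorientation of `K_{p,p}` with
partite sets `X = {x₁,…,x_p}` (left summand) and `Y = {y₁,…,y_p}` (right summand) by removing
all arcs `(xᵢ, yⱼ)` and `(yⱼ, xᵢ)` with `i, j < k`. -/
def KppArc (p k : ℕ) : (Fin p ⊕ Fin p) → (Fin p ⊕ Fin p) → Prop
  | Sum.inl i, Sum.inr j => ¬((i : ℕ) < k ∧ (j : ℕ) < k)
  | Sum.inr j, Sum.inl i => ¬((i : ℕ) < k ∧ (j : ℕ) < k)
  | _, _ => False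

instance (p k : ℕ) : DecidableRel (KppArc p k) := fun u v => by
  rcases u with i | i <;> rcases v with j | j <;> simp only [KppArc] <;> infer_instance

theorem aux_card_lt (p k : ℕ) (hkp : k ≤ p) :
    (univ.filter fun j : Fin p => (j : ℕ) < k).card = k := by
  have h : ((univ.filter fun j : Fin p => (j : ℕ) < k).map Fin.valEmbedding) = range k := by
    ext x
    simp only [mem_map, mem_filter, mem_univ, true_and, Fin.valEmbedding_apply, mem_range]
    constructor
    · rintro ⟨j, hj, rfl⟩
      exact hj
    · intro hx
      exact ⟨⟨x, by omega⟩, hx, rfl⟩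
  rw [← card_map, h, card_range]

theorem aux_card_ge (p k : ℕ) (hkp : k ≤ p) :
    (univ.filter fun j : Fin p => ¬ (j : ℕ) < k).card = p - k := by
  have h := card_filter_add_card_filter_not (s := (univ : Finset (Fin p)))
    (fun j : Fin p => (j : ℕ) < k)
  rw [aux_card_lt p k hkp, card_univ, Fintype.card_fin] at h
  omega

theorem aux_inl (p k : ℕ) (T : Finset (Fin p ⊕ Fin p)) (i : Fin p) :
    inDegOn (KppArc p k) T (Sum.inl i) =
      (T.toRight.filter fun j : Fin p => ¬((i : ℕ) < k ∧ (j : ℕ) < k)).card := by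
  unfold inDegOn
  rw [← card_map (Function.Embedding.inr : Fin p ↪ Fin p ⊕ Fin p)]
  congr 1
  ext x
  rw [mem_filter]
  rcases x with x | x <;> simp [KppArc]

theorem aux_inr (p k : ℕ) (T : Finset (Fin p ⊕ Fin p)) (i : Fin p) :
    inDegOn (KppArc p k) T (Sum.inr i) =
      (T.toLeft.filter fun j : Fin p => ¬((j : ℕ) < k ∧ (i : ℕ) < k)).card := by
  unfold inDegOn
  rw [← card_map (Function.Embedding.inl : Fin p ↪ Fin p ⊕ Fin p)]
  congr 1
  ext x
  rw [mem_filter]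
  rcases x with x | x <;> simp [KppArc]

theorem aux_inl_high (p k : ℕ) (T : Finset (Fin p ⊕ Fin p)) (i : Fin p) (hi : ¬ (i : ℕ) < k) :
    inDegOn (KppArc p k) T (Sum.inl i) = T.toRight.card := by
  rw [aux_inl]
  simp [hi]

theorem aux_inr_high (p k : ℕ) (T : Finset (Fin p ⊕ Fin p)) (i : Fin p) (hi : ¬ (i : ℕ) < k) :
    inDegOn (KppArc p k) T (Sum.inr i) = T.toLeft.card := by
  rw [aux_inr]
  simp [hi]

theorem aux_inl_low (p k : ℕ) (hkp : k ≤ p) (T : Finset (Fin p ⊕ Fin p)) (i : Fin p)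
    (hi : (i : ℕ) < k) : inDegOn (KppArc p k) T (Sum.inl i) ≤ p - k := by
  rw [aux_inl, ← aux_card_ge p k hkp]
  apply card_le_card
  intro j
  simp only [mem_filter, mem_univ, true_and]
  tauto

theorem aux_inr_low (p k : ℕ) (hkp : k ≤ p) (T : Finset (Fin p ⊕ Fin p)) (i : Fin p)
    (hi : (i : ℕ) < k) : inDegOn (KppArc p k) T (Sum.inr i) ≤ p - k := by
  rw [aux_inr, ← aux_card_ge p k hkp]
  apply card_le_card
  intro j
  simp only [mem_filter, mem_univ, true_and]
  tauto

theorem aux_lower (p k : ℕ) (hk : 1 ≤ k) (hkp : k ≤ p) (hp : p ≤ 2 * k - 1)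
    (S : Finset (Fin p ⊕ Fin p)) (hS : GOkA (KppArc p k) (k : ℤ) S) : p + k ≤ S.card := by
  have hL : ∀ i : Fin p, Sum.inl i ∉ S →
      ¬ (i : ℕ) < k ∧ Sᶜ.toRight.card + k ≤ S.toRight.card := by
    intro i hi
    have h := (hS _ hi).2
    have hlow : ¬ (i : ℕ) < k := by
      intro hlt
      have := aux_inl_low p k hkp S i hlt
      omega
    refine ⟨hlow, ?_⟩
    rw [aux_inl_high p k _ i hlow, aux_inl_high p k _ i hlow] at h
    exact_mod_cast h
  have hR : ∀ i : Fin p, Sum.inr i ∉ S →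
      ¬ (i : ℕ) < k ∧ Sᶜ.toLeft.card + k ≤ S.toLeft.card := by
    intro i hi
    have h := (hS _ hi).2
    have hlow : ¬ (i : ℕ) < k := by
      intro hlt
      have := aux_inr_low p k hkp S i hlt
      omega
    refine ⟨hlow, ?_⟩
    rw [aux_inr_high p k _ i hlow, aux_inr_high p k _ i hlow] at h
    exact_mod_cast h
  have eL : Sᶜ.toLeft = S.toLeftᶜ := by ext; simp
  have eR : Sᶜ.toRight = S.toRightᶜ := by ext; simp
  have cL := card_add_card_compl S.toLeft
  have cR := card_add_card_compl S.toRight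
  rw [Fintype.card_fin] at cL cR
  have cS := card_toLeft_add_card_toRight (u := S)
  rw [eR] at hL
  rw [eL] at hR
  have bL : S.toLeftᶜ.card ≤ p - k := by
    rw [← aux_card_ge p k hkp]
    apply card_le_card
    intro i hi
    simp only [mem_compl, mem_toLeft] at hi
    simpa using (hL i hi).1
  have bR : S.toRightᶜ.card ≤ p - k := by
    rw [← aux_card_ge p k hkp]
    apply card_le_card
    intro i hi
    simp only [mem_compl, mem_toRight] at hi
    simpa using (hR i hi).1
  rcases S.toLeftᶜ.eq_empty_or_nonempty with h1 | ⟨i, hi⟩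
  · rw [h1, card_empty] at cL
    omega
  rcases S.toRightᶜ.eq_empty_or_nonempty with h2 | ⟨j, hj⟩
  · rw [h2, card_empty] at cR
    omega
  simp only [mem_compl, mem_toLeft] at hi
  simp only [mem_compl, mem_toRight] at hj
  have := (hL i hi).2
  have := (hR j hj).2
  omega

theorem aux_attained (p k : ℕ) (hk : 1 ≤ k) (hkp : k ≤ p) :
    ∃ S : Finset (Fin p ⊕ Fin p), GOkA (KppArc p k) (k : ℤ) S ∧ S.card = p + k := by
  refine ⟨(univ.filter fun j : Fin p => (j : ℕ) < k).disjSum univ, ?_, ?_⟩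
  · rintro (i | i) hi
    · have hlow : ¬ (i : ℕ) < k := by simpa using hi
      refine ⟨⟨Sum.inr i, by simp, by simp [KppArc, hlow]⟩, ?_⟩
      rw [aux_inl_high p k _ i hlow, aux_inl_high p k _ i hlow, toRight_disjSum]
      have : ((univ.filter fun j : Fin p => (j : ℕ) < k).disjSum
          (univ : Finset (Fin p)))ᶜ.toRight = ∅ := by ext; simp
      rw [this]
      simpa using hkp
    · simp at hi
  · rw [card_disjSum, aux_card_lt p k hkp, card_univ, Fintype.card_fin, add_comm]

/-- For integers `1 ≤ k ≤ p ≤ 2k − 1`, the digraph `D` obtained from the complete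
biorientation of `K_{p,p}` by removing the arcs between the first `k` vertices of each side
has exactly `2k` vertices of in-degree less than `k`, and `γₖᵒ(D) = p + k = (n + n_{<k})/2`. -/
theorem goNum_Kpp_construction (p k : ℕ) (hk : 1 ≤ k) (hkp : k ≤ p) (hp : p ≤ 2 * k - 1) :
    (univ.filter fun v : Fin p ⊕ Fin p =>
        (inDegOn (KppArc p k) univ v : ℤ) < (k : ℤ)).card = 2 * k ∧
    goNum (KppArc p k) (k : ℤ) = p + k := by
  constructor
  · have h : (univ.filter fun v : Fin p ⊕ Fin p =>
        (inDegOn (KppArc p k) univ v : ℤ) < (k : ℤ)) =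
        (univ.filter fun j : Fin p => (j : ℕ) < k).disjSum
          (univ.filter fun j : Fin p => (j : ℕ) < k) := by
      have e1 : (univ : Finset (Fin p ⊕ Fin p)).toLeft = univ := by ext; simp
      have e2 : (univ : Finset (Fin p ⊕ Fin p)).toRight = univ := by ext; simp
      ext v
      rcases v with i | i
      · simp only [mem_filter, mem_univ, true_and, inl_mem_disjSum, Nat.cast_lt]
        by_cases hi : (i : ℕ) < k
        · have := aux_inl_low p k hkp univ i hi
          omega
        · rw [aux_inl_high p k _ i hi, e2, card_univ, Fintype.card_fin]
          omega
      · simp only [mem_filter, mem_univ, true_and, inr_mem_disjSum, Nat.cast_lt]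
        by_cases hi : (i : ℕ) < k
        · have := aux_inr_low p k hkp univ i hi
          omega
        · rw [aux_inr_high p k _ i hi, e1, card_univ, Fintype.card_fin]
          omega
    rw [h, card_disjSum, aux_card_lt p k hkp]
    omega
  · unfold goNum
    apply le_antisymm
    · exact Nat.sInf_le (aux_attained p k hk hkp)
    · apply le_csInf
      · exact ⟨_, aux_attained p k hk hkp⟩
      · rintro m ⟨S, hS, rfl⟩
        exact aux_lower p k hk hkp hp S hS
end

section
/- Let t ≥ 1 and k₁, …, k_t ≥ 0 be integers, and let D* be the connected functional digraph obtained from a directed cycle on vertices y₁, …, y_t by attaching, for each 1 ≤ i ≤ t, a disjoint directed path x_{i,1} → x_{i,2} → … → x_{i,2k_i+1} together with the arc (x_{i,2k_i+1}, y_i). Then γ₁ᵒ(D*) = ⌊(n + q + 1)/2⌋, where n is the order of D* and q = t is its number of sources; in particular the bound γ₁ᵒ(D) ≤ ⌊(n + q + 1)/2⌋ for connected functional digraphs is sharp. -/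
open Finset

variable {V : Type*}

/-- The arc relation of the connected functional digraph `D*` obtained from a directed cycle
on `y₁, …, y_t` (the left summand, `yᵢ → yᵢ₊₁` cyclically) by attaching, for each `i`, a
directed path `x_{i,1} → ⋯ → x_{i,2kᵢ+1}` (the right summand) together with the arc
`(x_{i,2kᵢ+1}, yᵢ)`. -/
def DstarArc (t : ℕ) (k : Fin t → ℕ) :
    (Fin t ⊕ (Σ i : Fin t, Fin (2 * k i + 1))) →
      (Fin t ⊕ (Σ i : Fin t, Fin (2 * k i + 1))) → Prop
  | Sum.inl i, Sum.inl j => (j : ℕ) = ((i : ℕ) + 1) % t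
  | Sum.inr ⟨i, a⟩, Sum.inr ⟨j, b⟩ => (i : ℕ) = (j : ℕ) ∧ (b : ℕ) = (a : ℕ) + 1
  | Sum.inr ⟨i, a⟩, Sum.inl j => i = j ∧ (a : ℕ) = 2 * k i
  | Sum.inl _, Sum.inr _ => False

instance (t : ℕ) (k : Fin t → ℕ) : DecidableRel (DstarArc t k) := fun u v => by
  rcases u with i | ⟨i, a⟩ <;> rcases v with j | ⟨j, b⟩ <;>
    simp only [DstarArc] <;> infer_instance

theorem card_even_fin (n : ℕ) :
    (univ.filter fun a : Fin n => (a : ℕ) % 2 = 0).card = (n + 1) / 2 := by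
  rw [Finset.card_filter]
  rw [Fin.sum_univ_eq_sum_range (fun a => if a % 2 = 0 then 1 else 0) n]
  induction n with
  | zero => simp
  | succ n ih =>
    rw [Finset.sum_range_succ, ih]
    split_ifs <;> omega

theorem two_card_ge {n : ℕ} (f : Fin n → Fin n) (T : Finset (Fin n))
    (h : ∀ b ∉ T, ∃ a ∈ T, f a = b) : n ≤ 2 * T.card := by
  have h1 : Tᶜ ⊆ T.image f := by
    intro b hb
    obtain ⟨a, ha, hab⟩ := h b (by simpa using hb)
    exact Finset.mem_image.2 ⟨a, ha, hab⟩
  have h2 := (Finset.card_le_card h1).trans Finset.card_image_le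
  have h3 := Finset.card_add_card_compl T
  rw [Fintype.card_fin] at h3
  omega

theorem sources_card (t : ℕ) (ht : 1 ≤ t) (k : Fin t → ℕ) :
    (univ.filter fun v : Fin t ⊕ (Σ i : Fin t, Fin (2 * k i + 1)) =>
        inDegOn (DstarArc t k) univ v = 0).card = t := by
  have h : (univ.filter fun v : Fin t ⊕ (Σ i : Fin t, Fin (2 * k i + 1)) =>
        inDegOn (DstarArc t k) univ v = 0) =
      univ.image (fun i : Fin t => (Sum.inr ⟨i, ⟨0, by omega⟩⟩ :
        Fin t ⊕ (Σ i : Fin t, Fin (2 * k i + 1)))) := by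
    ext v
    simp only [inDegOn, Finset.mem_filter, Finset.mem_univ, true_and, Finset.card_eq_zero,
      Finset.mem_image, Finset.filter_eq_empty_iff]
    constructor
    · intro h
      rcases v with j | ⟨j, b⟩
      · exact absurd (show DstarArc t k (Sum.inr ⟨j, ⟨2 * k j, by omega⟩⟩) (Sum.inl j) from
          ⟨rfl, rfl⟩) (h (by trivial))
      · refine ⟨j, ?_⟩
        obtain ⟨b, hb⟩ := b
        rcases b with _ | b
        · rfl
        · exact absurd (show DstarArc t k (Sum.inr ⟨j, ⟨b, by omega⟩⟩)
            (Sum.inr ⟨j, ⟨b + 1, hb⟩⟩) from ⟨rfl, rfl⟩) (h (by trivial))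
    · rintro ⟨i, rfl⟩ u _ hu
      rcases u with j | ⟨j, b⟩
      · exact hu
      · exact absurd hu.2 (by simp)
  rw [h, Finset.card_image_of_injective, Finset.card_univ, Fintype.card_fin]
  intro i j hij
  simp only [Sum.inr.injEq, Sigma.mk.injEq] at hij
  exact hij.1

theorem lower_bound (t : ℕ) (ht : 1 ≤ t) (k : Fin t → ℕ)
    (S : Finset (Fin t ⊕ (Σ i : Fin t, Fin (2 * k i + 1)))) (hS : GOkA (DstarArc t k) 1 S) :
    (t + 1) / 2 + ∑ i, (k i + 1) ≤ S.card := by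
  rw [← Finset.card_toLeft_add_card_toRight]
  apply Nat.add_le_add
  · have := two_card_ge (fun i : Fin t => (⟨((i : ℕ) + 1) % t, Nat.mod_lt _ ht⟩ : Fin t))
      S.toLeft ?_
    · omega
    intro j hj
    rw [Finset.mem_toLeft] at hj
    obtain ⟨i, hi⟩ : ∃ i : Fin t, (j : ℕ) = ((i : ℕ) + 1) % t := by
      by_cases h0 : (j : ℕ) = 0
      · refine ⟨⟨t - 1, by omega⟩, ?_⟩
        simp only
        rw [Nat.sub_add_cancel ht, Nat.mod_self, h0]
      · refine ⟨⟨j - 1, by omega⟩, ?_⟩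
        simp only
        rw [Nat.sub_add_cancel (by omega), Nat.mod_eq_of_lt j.2]
    refine ⟨i, ?_, Fin.ext hi.symm⟩
    rw [Finset.mem_toLeft]
    by_contra hiS
    have h2 := (hS _ hj).2
    have h3 : 0 < inDegOn (DstarArc t k) Sᶜ (Sum.inl j) :=
      Finset.card_pos.2 ⟨Sum.inl i, by simp only [Finset.mem_filter, Finset.mem_compl]; exact ⟨hiS, hi⟩⟩
    have h4 : inDegOn (DstarArc t k) S (Sum.inl j) ≤ 1 := by
      unfold inDegOn
      refine le_trans (Finset.card_le_card ?_)
        (Finset.card_singleton (Sum.inr ⟨j, ⟨2 * k j, by omega⟩⟩ :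
          Fin t ⊕ (Σ i : Fin t, Fin (2 * k i + 1)))).le
      intro u hu
      rw [Finset.mem_filter] at hu
      obtain ⟨huS, hu⟩ := hu
      rw [Finset.mem_singleton]
      rcases u with i' | ⟨i', a⟩
      · exfalso
        apply hiS
        have hu' : (j : ℕ) = ((i' : ℕ) + 1) % t := hu
        have : i' = i := by
          apply Fin.ext
          have hm : ((i' : ℕ) + 1) ≡ ((i : ℕ) + 1) [MOD t] := hu'.symm.trans hi
          have hm' := Nat.ModEq.add_right_cancel' 1 hm
          exact Nat.ModEq.eq_of_lt_of_lt hm' i'.2 i.2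
        rwa [← this]
      · obtain ⟨rfl, h⟩ := hu
        congr 2
        exact Fin.ext h
    omega
  · have hR : S.toRight = univ.sigma
        (fun i => univ.filter fun a : Fin (2 * k i + 1) => Sum.inr ⟨i, a⟩ ∈ S) := by
      ext ⟨i, a⟩
      simp
    rw [hR, Finset.card_sigma]
    apply Finset.sum_le_sum
    intro i _
    have := two_card_ge (fun a : Fin (2 * k i + 1) =>
      (⟨((a : ℕ) + 1) % (2 * k i + 1), Nat.mod_lt _ (by omega)⟩ : Fin (2 * k i + 1)))
      (univ.filter fun a : Fin (2 * k i + 1) => Sum.inr ⟨i, a⟩ ∈ S) ?_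
    · omega
    intro b hb
    have hb' : Sum.inr ⟨i, b⟩ ∉ S := by simpa using hb
    obtain ⟨u, huS, hu⟩ := (hS _ hb').1
    rcases u with i' | ⟨i', a⟩
    · exact hu.elim
    · obtain ⟨h1, h2⟩ := hu
      obtain rfl : i' = i := Fin.ext h1
      refine ⟨a, by simpa using huS, Fin.ext ?_⟩
      simp only
      rw [← h2, Nat.mod_eq_of_lt b.2]

theorem upper_bound (t : ℕ) (ht : 1 ≤ t) (k : Fin t → ℕ) :
    ∃ S : Finset (Fin t ⊕ (Σ i : Fin t, Fin (2 * k i + 1))), GOkA (DstarArc t k) 1 S ∧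
      S.card = (t + 1) / 2 + ∑ i, (k i + 1) := by
  refine ⟨(univ.filter fun a : Fin t => (a : ℕ) % 2 = 0).disjSum (univ.sigma
    (fun i => univ.filter fun a : Fin (2 * k i + 1) => (a : ℕ) % 2 = 0)), ?_, ?_⟩
  · intro v hv
    set S := (univ.filter fun a : Fin t => (a : ℕ) % 2 = 0).disjSum (univ.sigma
      (fun i => univ.filter fun a : Fin (2 * k i + 1) => (a : ℕ) % 2 = 0)) with hSdef
    have hl : ∀ i, Sum.inl i ∈ S ↔ (i : ℕ) % 2 = 0 := by
      intro i; simp [hSdef]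
    have hr : ∀ (i : Fin t) (a : Fin (2 * k i + 1)), Sum.inr ⟨i, a⟩ ∈ S ↔ (a : ℕ) % 2 = 0 := by
      intro i a; simp [hSdef]
    have hall : ∀ u, DstarArc t k u v → u ∈ S := by
      intro u hu
      rcases v with j | ⟨j, b⟩ <;> rcases u with i | ⟨i, a⟩
      · rw [hl] at hv ⊢
        have hu' : (j : ℕ) = ((i : ℕ) + 1) % t := hu
        rcases Nat.lt_or_ge ((i : ℕ) + 1) t with h | h
        · rw [Nat.mod_eq_of_lt h] at hu'
          omega
        · have : (i : ℕ) + 1 = t := by omega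
          rw [this, Nat.mod_self] at hu'
          omega
      · rw [hr]
        have := hu.2
        omega
      · exact hu.elim
      · rw [hr] at hv ⊢
        have := hu.2
        omega
    have hex : ∃ u, DstarArc t k u v := by
      rcases v with j | ⟨j, b⟩
      · exact ⟨Sum.inr ⟨j, ⟨2 * k j, by omega⟩⟩, rfl, rfl⟩
      · rw [hr] at hv
        refine ⟨Sum.inr ⟨j, ⟨b - 1, by omega⟩⟩, rfl, ?_⟩
        simp only
        omega
    obtain ⟨u, hu⟩ := hex
    refine ⟨⟨u, hall u hu, hu⟩, ?_⟩
    have h0 : inDegOn (DstarArc t k) Sᶜ v = 0 := by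
      unfold inDegOn
      rw [Finset.card_eq_zero, Finset.filter_eq_empty_iff]
      intro w hw hwv
      exact (Finset.mem_compl.1 hw) (hall w hwv)
    have h1 : 0 < inDegOn (DstarArc t k) S v :=
      Finset.card_pos.2 ⟨u, Finset.mem_filter.2 ⟨hall u hu, hu⟩⟩
    omega
  · rw [Finset.card_disjSum, Finset.card_sigma, card_even_fin]
    congr 1
    apply Finset.sum_congr rfl
    intro i _
    rw [card_even_fin]
    omega

/-- For the connected functional digraph `D*` (a directed cycle `y₁, …, y_t` with a directed
path on `2kᵢ + 1` vertices attached to each `yᵢ`), the number of sources is `q = t` and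
`γ₁ᵒ(D*) = ⌊(n + q + 1)/2⌋`; hence the bound `γ₁ᵒ(D) ≤ ⌊(n + q + 1)/2⌋` for connected
functional digraphs is sharp. -/
theorem goNum_Dstar_sharp (t : ℕ) (ht : 1 ≤ t) (k : Fin t → ℕ) :
    (univ.filter fun v : Fin t ⊕ (Σ i : Fin t, Fin (2 * k i + 1)) =>
        inDegOn (DstarArc t k) univ v = 0).card = t ∧
    goNum (DstarArc t k) 1 =
      (Fintype.card (Fin t ⊕ (Σ i : Fin t, Fin (2 * k i + 1))) + t + 1) / 2 := by
  refine ⟨sources_card t ht k, ?_⟩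
  have hval : (Fintype.card (Fin t ⊕ (Σ i : Fin t, Fin (2 * k i + 1))) + t + 1) / 2 =
      (t + 1) / 2 + ∑ i, (k i + 1) := by
    simp only [Fintype.card_sum, Fintype.card_sigma, Fintype.card_fin, Finset.sum_add_distrib,
      ← Finset.mul_sum, Finset.sum_const, Finset.card_univ, smul_eq_mul, mul_one]
    omega
  rw [hval]
  unfold goNum
  apply le_antisymm
  · exact Nat.sInf_le (upper_bound t ht k)
  · apply le_csInf
    · exact ⟨_, upper_bound t ht k⟩
    · rintro m ⟨S, hS, rfl⟩
      exact lower_bound t ht k S hS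
end

section
/- Let b ≥ 1 be an integer and let D' be the digraph obtained from a directed cycle on vertices v₁, …, v_{2b} by adding new vertices v'₁, …, v'_{2b} and the arcs (v'ᵢ, vᵢ) for 1 ≤ i ≤ 2b. Then γ(D') = 2b and γ₁ᵒ(D') = 3b; in particular γ₁ᵒ(D') − γ(D') = b, so the difference between the global offensive 1-alliance number and the domination number can be arbitrarily large even for connected functional digraphs. -/
open Finset

variable {V : Type*}

/-- `S` is a dominating set of the digraph with arc relation `A`. -/
def Dominating [Fintype V] (A : V → V → Prop) (S : Finset V) : Prop :=
  ∀ v ∉ S, ∃ u ∈ S, A u v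

/-- The domination number of a digraph. -/
noncomputable def domNum [Fintype V] (A : V → V → Prop) : ℕ :=
  sInf {m | ∃ S : Finset V, Dominating A S ∧ S.card = m}

/-- The arc relation of the digraph `D'` obtained from a directed cycle on
`v₁, …, v_{2b}` (the left summand, `vᵢ → vᵢ₊₁` cyclically) by adding new vertices
`v'₁, …, v'_{2b}` (the right summand) and the arcs `(v'ᵢ, vᵢ)`. -/
def DprimeArc (b : ℕ) : (Fin (2 * b) ⊕ Fin (2 * b)) → (Fin (2 * b) ⊕ Fin (2 * b)) → Prop
  | Sum.inl i, Sum.inl j => (j : ℕ) = ((i : ℕ) + 1) % (2 * b)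
  | Sum.inr i, Sum.inl j => i = j
  | _, _ => False

instance (b : ℕ) : DecidableRel (DprimeArc b) := fun u v => by
  rcases u with i | i <;> rcases v with j | j <;> simp only [DprimeArc] <;> infer_instance

theorem inr_mem_of_dominating (b : ℕ) (S : Finset (Fin (2 * b) ⊕ Fin (2 * b)))
    (h : Dominating (DprimeArc b) S) (i : Fin (2 * b)) : Sum.inr i ∈ S := by
  by_contra hi
  obtain ⟨u, -, hu⟩ := h _ hi
  rcases u with u | u <;> exact hu

theorem two_mul_le_card_toRight (b : ℕ) (S : Finset (Fin (2 * b) ⊕ Fin (2 * b)))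
    (h : Dominating (DprimeArc b) S) : S.toRight.card = 2 * b := by
  have : S.toRight = Finset.univ := by
    ext i
    simp [inr_mem_of_dominating b S h i]
  rw [this]
  simp

theorem pred_exists (b : ℕ) (j : Fin (2 * b)) :
    ∃ i : Fin (2 * b), (j : ℕ) = ((i : ℕ) + 1) % (2 * b) := by
  have hj := j.isLt
  by_cases h0 : (j : ℕ) = 0
  · refine ⟨⟨2 * b - 1, by omega⟩, ?_⟩
    have : 2 * b - 1 + 1 = 2 * b := by omega
    simp [this, h0]
  · refine ⟨⟨(j : ℕ) - 1, by omega⟩, ?_⟩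
    have : (j : ℕ) - 1 + 1 = j := by omega
    simp [this, Nat.mod_eq_of_lt hj]

theorem le_card_toLeft (b : ℕ) (S : Finset (Fin (2 * b) ⊕ Fin (2 * b)))
    (h : GOkA (DprimeArc b) 1 S) : b ≤ S.toLeft.card := by
  have hsub : S.toLeftᶜ ⊆ S.toLeft.image
      (fun i : Fin (2 * b) => (⟨((i : ℕ) + 1) % (2 * b), Nat.mod_lt _ i.pos⟩ : Fin (2 * b))) := by
    intro j hj
    have hjS : Sum.inl j ∉ S := by simpa using hj
    obtain ⟨i, hi⟩ := pred_exists b j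
    rw [Finset.mem_image]
    by_contra hcon
    have hout : ∀ k : Fin (2 * b), (j : ℕ) = ((k : ℕ) + 1) % (2 * b) → Sum.inl k ∉ S := by
      intro k hk hkS
      exact hcon ⟨k, by simpa using hkS, Fin.ext hk.symm⟩
    have h1 : 1 ≤ inDegOn (DprimeArc b) Sᶜ (Sum.inl j) := by
      unfold inDegOn
      refine Finset.card_pos.mpr ⟨Sum.inl i, ?_⟩
      rw [Finset.mem_filter, Finset.mem_compl]
      exact ⟨hout i hi, hi⟩
    have h2 : inDegOn (DprimeArc b) S (Sum.inl j) ≤ 1 := by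
      unfold inDegOn
      rw [← Finset.card_singleton (Sum.inr j : Fin (2 * b) ⊕ Fin (2 * b))]
      refine Finset.card_le_card ?_
      intro u hu
      rw [Finset.mem_filter] at hu
      rcases u with u | u
      · exact absurd hu.1 (hout u hu.2)
      · have : u = j := hu.2
        simp [this]
    have h3 := (h _ hjS).2
    omega
  have h1 := (Finset.card_le_card hsub).trans Finset.card_image_le
  rw [Finset.card_compl, Fintype.card_fin] at h1
  omega

/-- The even cycle vertices. -/
def evenPart (b : ℕ) : Finset (Fin (2 * b)) :=
  Finset.univ.image (fun i : Fin b => (⟨2 * (i : ℕ), by have := i.isLt; omega⟩ : Fin (2 * b)))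

theorem card_evenPart (b : ℕ) : (evenPart b).card = b := by
  unfold evenPart
  rw [Finset.card_image_of_injective]
  · simp
  · intro i j hij
    have := congrArg Fin.val hij
    ext
    simpa using this

theorem mem_evenPart (b : ℕ) (j : Fin (2 * b)) : j ∈ evenPart b ↔ (j : ℕ) % 2 = 0 := by
  unfold evenPart
  rw [Finset.mem_image]
  constructor
  · rintro ⟨i, -, rfl⟩
    simp
  · intro hj
    have := j.isLt
    exact ⟨⟨(j : ℕ) / 2, by omega⟩, Finset.mem_univ _, Fin.ext (by simp only []; omega)⟩

theorem even_alliance (b : ℕ) :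
    GOkA (DprimeArc b) 1 ((evenPart b).disjSum Finset.univ) := by
  intro v hv
  rcases v with j | j
  · have hj : ¬ (j : ℕ) % 2 = 0 := by
      rw [← mem_evenPart]
      simpa using hv
    have hmem : Sum.inr j ∈ (evenPart b).disjSum (Finset.univ : Finset (Fin (2 * b))) := by simp
    have harc : DprimeArc b (Sum.inr j) (Sum.inl j) := rfl
    refine ⟨⟨Sum.inr j, hmem, harc⟩, ?_⟩
    have h1 : 1 ≤ inDegOn (DprimeArc b) ((evenPart b).disjSum Finset.univ) (Sum.inl j) :=
      Finset.card_pos.mpr ⟨Sum.inr j, Finset.mem_filter.mpr ⟨hmem, harc⟩⟩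
    have h0 : inDegOn (DprimeArc b) ((evenPart b).disjSum Finset.univ)ᶜ (Sum.inl j) = 0 := by
      unfold inDegOn
      rw [Finset.card_eq_zero, Finset.filter_eq_empty_iff]
      intro u hu hA
      rw [Finset.mem_compl] at hu
      rcases u with u | u
      · have hu' : ¬ (u : ℕ) % 2 = 0 := by
          rw [← mem_evenPart]
          simpa using hu
        have hA' : (j : ℕ) = ((u : ℕ) + 1) % (2 * b) := hA
        apply hj
        rw [hA', Nat.mod_mul_right_mod]
        omega
      · simp at hu
    omega
  · simp at hv

/-- For the connected functional digraph `D'` (a directed cycle `v₁ → ⋯ → v_{2b} → v₁` with a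
pendant in-neighbor `v'ᵢ` attached to each `vᵢ`), `γ(D') = 2b` and `γ₁ᵒ(D') = 3b`; hence
`γ₁ᵒ(D') − γ(D') = b` can be arbitrarily large for connected functional digraphs. -/
theorem domNum_goNum_gap_functional (b : ℕ) (hb : 1 ≤ b) :
    domNum (DprimeArc b) = 2 * b ∧ goNum (DprimeArc b) 1 = 3 * b := by
  constructor
  · apply le_antisymm
    · refine Nat.sInf_le ⟨(∅ : Finset (Fin (2 * b))).disjSum Finset.univ, ?_, by simp⟩
      intro v hv
      rcases v with j | j
      · exact ⟨Sum.inr j, by simp, rfl⟩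
      · simp at hv
    · refine le_csInf ⟨_, Finset.univ, fun v hv => absurd (Finset.mem_univ v) hv, rfl⟩ ?_
      rintro m ⟨S, hS, rfl⟩
      have h1 := two_mul_le_card_toRight b S hS
      have h2 := S.card_toLeft_add_card_toRight
      omega
  · apply le_antisymm
    · refine Nat.sInf_le ⟨_, even_alliance b, ?_⟩
      rw [Finset.card_disjSum, card_evenPart, Finset.card_univ, Fintype.card_fin]
      omega
    · refine le_csInf ⟨_, _, even_alliance b, rfl⟩ ?_
      rintro m ⟨S, hS, rfl⟩
      have h1 := two_mul_le_card_toRight b S (fun v hv => (hS v hv).1)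
      have h2 := S.card_toLeft_add_card_toRight
      have h3 := le_card_toLeft b S hS
      omega
end

section
/- Let b ≥ 1 be an integer and let T be the directed tree obtained from the digraph D' of the previous construction (directed cycle v₁ → v₂ → … → v_{2b} → v₁ with added arcs (v'ᵢ, vᵢ) for 1 ≤ i ≤ 2b) by removing one arc of the directed cycle. Then γ(T) = 2b and γ₁ᵒ(T) = 3b; in particular γ₁ᵒ(T) − γ(T) = b, so the difference between the global offensive 1-alliance number and the domination number can be arbitrarily large for directed trees. -/
open Finset

variable {V : Type*}

/-- The arc relation of the directed tree `T` obtained from `D'` (a directed cycle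
`v₁ → ⋯ → v_{2b} → v₁` with pendant in-neighbors `v'ᵢ → vᵢ`) by removing the cycle arc
`(v_{2b}, v₁)`: the left summand carries the path `v₁ → ⋯ → v_{2b}` and each right-summand
vertex `v'ᵢ` has the single arc `(v'ᵢ, vᵢ)`. -/
def TreeArc (b : ℕ) : (Fin (2 * b) ⊕ Fin (2 * b)) → (Fin (2 * b) ⊕ Fin (2 * b)) → Prop
  | Sum.inl i, Sum.inl j => (j : ℕ) = (i : ℕ) + 1
  | Sum.inr i, Sum.inl j => i = j
  | _, _ => False

instance (b : ℕ) : DecidableRel (TreeArc b) := fun u v => by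
  rcases u with i | i <;> rcases v with j | j <;> simp only [TreeArc] <;> infer_instance

theorem tree_inr_mem (b : ℕ) (S : Finset (Fin (2 * b) ⊕ Fin (2 * b)))
    (hS : ∀ v ∉ S, ∃ u ∈ S, TreeArc b u v) (i : Fin (2 * b)) : Sum.inr i ∈ S := by
  by_contra h
  obtain ⟨u, _, hu⟩ := hS _ h
  rcases u with u | u <;> exact hu

theorem tree_pair (b : ℕ) (S : Finset (Fin (2 * b) ⊕ Fin (2 * b)))
    (hS : GOkA (TreeArc b) 1 S) (i j : Fin (2 * b)) (hij : (j : ℕ) = i + 1)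
    (hj : Sum.inl j ∉ S) : Sum.inl i ∈ S := by
  by_contra hi
  have h := (hS _ hj).2
  have h1 : 1 ≤ inDegOn (TreeArc b) Sᶜ (Sum.inl j) := by
    unfold inDegOn
    rw [Nat.succ_le_iff, Finset.card_pos]
    exact ⟨Sum.inl i, Finset.mem_filter.2 ⟨Finset.mem_compl.2 hi, hij⟩⟩
  have h2 : inDegOn (TreeArc b) S (Sum.inl j) ≤ 1 := by
    unfold inDegOn
    rw [← Finset.card_singleton (Sum.inr j : Fin (2 * b) ⊕ Fin (2 * b))]
    apply Finset.card_le_card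
    intro u hu
    rw [Finset.mem_filter] at hu
    rcases u with u | u
    · have h3 : (j : ℕ) = u + 1 := hu.2
      have : u = i := Fin.ext (by omega)
      subst this
      exact absurd hu.1 hi
    · have h3 : u = j := hu.2
      simp [h3]
  omega

/-- A minimum alliance, enumerated: all pendant vertices and the odd-indexed path vertices. -/
def treeEnum (b : ℕ) : Fin (2 * b) ⊕ Fin b → Fin (2 * b) ⊕ Fin (2 * b)
  | Sum.inl i => Sum.inr i
  | Sum.inr k => Sum.inl ⟨2 * k + 1, by omega⟩

theorem treeEnum_inj (b : ℕ) : Function.Injective (treeEnum b) := by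
  rintro (x | x) (y | y) h <;> simp [treeEnum] at h ⊢
  · exact h
  · exact Fin.ext (by omega)

theorem treeEnum_alliance (b : ℕ) : GOkA (TreeArc b) 1 (Finset.univ.image (treeEnum b)) := by
  intro v hv
  have hr : ∀ i : Fin (2 * b), Sum.inr i ∈ Finset.univ.image (treeEnum b) := fun i =>
    Finset.mem_image.2 ⟨Sum.inl i, Finset.mem_univ _, rfl⟩
  have hl : ∀ i : Fin (2 * b), (i : ℕ) % 2 = 1 →
      Sum.inl i ∈ Finset.univ.image (treeEnum b) := fun i h =>
    Finset.mem_image.2 ⟨Sum.inr ⟨i / 2, by omega⟩, Finset.mem_univ _, by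
      simp only [treeEnum, Sum.inl.injEq]; exact Fin.ext (by simp only []; omega)⟩
  rcases v with j | j
  · have hj : (j : ℕ) % 2 ≠ 1 := fun h => hv (hl j h)
    refine ⟨⟨Sum.inr j, hr j, rfl⟩, ?_⟩
    have h0 : inDegOn (TreeArc b) (Finset.univ.image (treeEnum b))ᶜ (Sum.inl j) = 0 := by
      unfold inDegOn
      rw [Finset.card_eq_zero, Finset.filter_eq_empty_iff]
      intro u hu ha
      rw [Finset.mem_compl] at hu
      rcases u with u | u
      · have h3 : (j : ℕ) = u + 1 := ha
        exact hu (hl u (by omega))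
      · exact hu (hr u)
    have h1 : 1 ≤ inDegOn (TreeArc b) (Finset.univ.image (treeEnum b)) (Sum.inl j) := by
      unfold inDegOn
      rw [Nat.succ_le_iff, Finset.card_pos]
      exact ⟨Sum.inr j, Finset.mem_filter.2 ⟨hr j, rfl⟩⟩
    omega
  · exact absurd (hr j) hv

theorem tree_go_lower (b : ℕ) (S : Finset (Fin (2 * b) ⊕ Fin (2 * b)))
    (hS : GOkA (TreeArc b) 1 S) : 3 * b ≤ S.card := by
  classical
  have hk : ∀ k : Fin b, ∃ i : Fin (2 * b), (i : ℕ) / 2 = k ∧ Sum.inl i ∈ S := by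
    intro k
    by_cases h : Sum.inl (⟨2 * k + 1, by omega⟩ : Fin (2 * b)) ∈ S
    · exact ⟨_, by simp only []; omega, h⟩
    · exact ⟨⟨2 * k, by omega⟩, by simp only []; omega, tree_pair b S hS _ _ rfl h⟩
  choose f hf hfS using hk
  let g : Fin (2 * b) ⊕ Fin b → Fin (2 * b) ⊕ Fin (2 * b) :=
    Sum.elim Sum.inr (fun k => Sum.inl (f k))
  have hg : Function.Injective g := by
    rintro (x | x) (y | y) h <;> simp [g] at h ⊢
    · exact h
    · exact Fin.ext (by rw [← hf x, ← hf y, h])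
  have hsub : Finset.univ.image g ⊆ S := by
    intro v hv
    obtain ⟨x, _, rfl⟩ := Finset.mem_image.1 hv
    rcases x with x | x
    · exact tree_inr_mem b S (fun v hv => (hS v hv).1) x
    · exact hfS x
  have := Finset.card_le_card hsub
  rw [Finset.card_image_of_injective _ hg] at this
  simp at this
  omega

/-- For the directed tree `T` obtained from `D'` by removing one arc of the directed cycle,
`γ(T) = 2b` and `γ₁ᵒ(T) = 3b`; hence `γ₁ᵒ(T) − γ(T) = b` can be arbitrarily large for
directed trees. -/
theorem domNum_goNum_gap_tree (b : ℕ) (hb : 1 ≤ b) :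
    domNum (TreeArc b) = 2 * b ∧ goNum (TreeArc b) 1 = 3 * b := by
  constructor
  · refine IsLeast.csInf_eq ⟨⟨Finset.univ.image Sum.inr, ?_, ?_⟩, ?_⟩
    · intro v hv
      rcases v with j | j
      · exact ⟨Sum.inr j, by simp, rfl⟩
      · simp at hv
    · rw [Finset.card_image_of_injective _ Sum.inr_injective]
      simp
    · rintro m ⟨S, hS, rfl⟩
      have hsub : Finset.univ.image Sum.inr ⊆ S := by
        intro v hv
        obtain ⟨x, _, rfl⟩ := Finset.mem_image.1 hv
        exact tree_inr_mem b S hS x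
      have := Finset.card_le_card hsub
      rw [Finset.card_image_of_injective _ Sum.inr_injective] at this
      simpa using this
  · refine IsLeast.csInf_eq ⟨⟨_, treeEnum_alliance b, ?_⟩, ?_⟩
    · rw [Finset.card_image_of_injective _ (treeEnum_inj b)]
      simp
      omega
    · rintro m ⟨S, hS, rfl⟩
      exact tree_go_lower b S hS
end

section
/- Let D be a finite digraph without loops, let k be an integer, and let S be a global offensive k-alliance in D. Then Δ⁺(D)·|S| ≥ Σ_{v ∉ S} deg⁻_S(v) ≥ Σ_{v ∉ S} (deg⁻_{V(D)\S}(v) + k) ≥ (k + δ⁻(D))·|V(D)\S| − Δ⁺(D)·|S|, where the middle sums run over all vertices outside S. -/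
open Finset

variable {V : Type*}

/-- For any global offensive `k`-alliance `S` in a digraph `D`:
`Δ⁺·|S| ≥ Σ_{v ∉ S} deg⁻_S(v) ≥ Σ_{v ∉ S} (deg⁻_{S̄}(v) + k) ≥ (k + δ⁻)·|S̄| − Δ⁺·|S|`. -/
theorem goka_inequality_chain [Fintype V] [DecidableEq V] [Nonempty V]
    (A : V → V → Prop) [DecidableRel A] (hloopless : ∀ v, ¬ A v v) (k : ℤ)
    (S : Finset V) (hS : GOkA A k S) :
    ((maxOutDeg A : ℤ) * S.card ≥ ∑ v ∈ Sᶜ, (inDegOn A S v : ℤ)) ∧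
    (∑ v ∈ Sᶜ, (inDegOn A S v : ℤ) ≥ ∑ v ∈ Sᶜ, ((inDegOn A Sᶜ v : ℤ) + k)) ∧
    (∑ v ∈ Sᶜ, ((inDegOn A Sᶜ v : ℤ) + k) ≥
      (k + (minInDeg A : ℤ)) * Sᶜ.card - (maxOutDeg A : ℤ) * S.card) := by
  have h1 : ∑ v ∈ Sᶜ, inDegOn A S v ≤ maxOutDeg A * S.card := by
    have e : ∑ v ∈ Sᶜ, inDegOn A S v = ∑ u ∈ S, outDegOn A Sᶜ u := by
      simp only [inDegOn, outDegOn, Finset.card_filter]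
      exact Finset.sum_comm
    rw [e, mul_comm, ← smul_eq_mul]
    apply Finset.sum_le_card_nsmul
    intro u _
    calc outDegOn A Sᶜ u ≤ outDegOn A univ u :=
          Finset.card_le_card (Finset.filter_subset_filter _ (Finset.subset_univ _))
      _ ≤ maxOutDeg A :=
          Finset.le_sup (f := fun v => outDegOn A univ v) (Finset.mem_univ u)
  have h1' : ∑ v ∈ Sᶜ, (inDegOn A S v : ℤ) ≤ (maxOutDeg A : ℤ) * S.card := by
    exact_mod_cast h1
  refine ⟨h1', ?_, ?_⟩
  · apply Finset.sum_le_sum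
    intro v hv
    exact (hS v (Finset.mem_compl.mp hv)).2
  · have h2 : ∑ v ∈ Sᶜ, (k + (minInDeg A : ℤ)) ≤
        ∑ v ∈ Sᶜ, (((inDegOn A Sᶜ v : ℤ) + k) + (inDegOn A S v : ℤ)) := by
      apply Finset.sum_le_sum
      intro v _
      have hmin : minInDeg A ≤ inDegOn A univ v :=
        Finset.inf'_le (fun v => inDegOn A univ v) (Finset.mem_univ v)
      have hsplit : inDegOn A univ v = inDegOn A S v + inDegOn A Sᶜ v := by
        simp only [inDegOn, Finset.card_filter]
        exact (Finset.sum_add_sum_compl S _).symm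
      omega
    rw [Finset.sum_const, nsmul_eq_mul, Finset.sum_add_distrib] at h2
    linarith [mul_comm (k + (minInDeg A : ℤ)) (Sᶜ.card : ℤ)]
end
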